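/- arXiv:0712.2559 — 3 statements merged into one kernel-verified Lean document; each statement's English description precedes it below -/
import Mathlib

section
/- Let (A(n))_{n∈ℤ} be a stationary and ergodic sequence of random d×d matrices with entries in ℝ_max, almost surely having at least one finite entry on each row, such that the positive part of max_{ij} A_{ij}(0) is integrable. If (1/n)·x(n,0) converges almost surely, then its limit is deterministic and for every i ∈ {1,…,d}, lim_n (1/n)·x_i(n,0) = max{ γ^{(c)} : c a strongly connected component of 𝒢(A) with i → c } almost surely. -/
open Filter MeasureTheory ProbabilityTheory Topology

noncomputable section

/-- Max-plus action of a `d × d` matrix over `ℝ_max = ℝ ∪ {-∞}` (encoded as `EReal`,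
with `⊤` never used) on a vector: `(A ⊗ v) i = max_j (A i j + v j)`. -/
def mpVec {d : ℕ} (A : Fin d → Fin d → EReal) (v : Fin d → EReal) : Fin d → EReal :=
  fun i => ⨆ j, A i j + v j

/-- `appProd n f v = f 0 ⊗ f 1 ⊗ ⋯ ⊗ f (n-1) ⊗ v` in the max-plus algebra. -/
def appProd {d : ℕ} : ℕ → (ℕ → Fin d → Fin d → EReal) → (Fin d → EReal) → Fin d → EReal
  | 0, _, v => v
  | n + 1, f, v => mpVec (f 0) (appProd n (fun k => f (k + 1)) v)

/-- `xvec f n = f (n-1) ⊗ ⋯ ⊗ f 0 ⊗ 0`; with `f m = A(m)` this is `x(n, 0)`. -/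
def xvec {d : ℕ} (f : ℕ → Fin d → Fin d → EReal) : ℕ → Fin d → EReal
  | 0 => fun _ => 0
  | n + 1 => mpVec (f n) (xvec f n)

/-- `lvec n f = f 0 ⊗ f 1 ⊗ ⋯ ⊗ f (n-1) ⊗ 0`; with `f k = A(-(k+1))` this is `y(n, 0)`. -/
def lvec {d : ℕ} (n : ℕ) (f : ℕ → Fin d → Fin d → EReal) : Fin d → EReal :=
  appProd n f (fun _ => 0)

/-- Multiplication of an extended real by `1/n`. -/
def mpScale (n : ℕ) (x : EReal) : EReal := (((n : ℝ)⁻¹ : ℝ) : EReal) * x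

open Classical in
/-- Restriction of a matrix to the indices in `c`: entries outside `c × c` are `-∞`. -/
def mpRestrict {d : ℕ} (c : Set (Fin d)) (M : Fin d → Fin d → EReal) : Fin d → Fin d → EReal :=
  fun i j => if i ∈ c ∧ j ∈ c then M i j else ⊥

/-- Arc relation of the graph `𝒢(A)` of a random matrix `A`:
`(i,j)` is an arc iff `A ω i j ≠ -∞` with positive probability. -/
def arcRel {Ω : Type*} [MeasurableSpace Ω] (μ : Measure Ω) {d : ℕ}
    (A : Ω → Fin d → Fin d → EReal) (i j : Fin d) : Prop :=
  μ {ω | A ω i j ≠ ⊥} ≠ 0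

/-- `c` is a strongly connected component of the graph with arc relation `r`
(the mutual-reachability class of some node; nodes on no circuit are alone in their class). -/
def IsSCC {d : ℕ} (r : Fin d → Fin d → Prop) (c : Set (Fin d)) : Prop :=
  ∃ i, c = {j | Relation.ReflTransGen r i j ∧ Relation.ReflTransGen r j i}

/-- `i → c` : the node `i` reaches the component `c`. -/
def nodeReach {d : ℕ} (r : Fin d → Fin d → Prop) (i : Fin d) (c : Set (Fin d)) : Prop :=
  ∃ j ∈ c, Relation.ReflTransGen r i j

/-- `c → c'` : the component `c` reaches the component `c'`. -/
def sccReach {d : ℕ} (r : Fin d → Fin d → Prop) (c c' : Set (Fin d)) : Prop :=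
  ∃ i ∈ c, nodeReach r i c'

/-- `γ^{[c]} = max { γ^{(c')} : c → c' }`, where `γ` assigns to each s.c.c. its
maximal Lyapunov exponent. -/
def gammaBrack {d : ℕ} (r : Fin d → Fin d → Prop) (γ : Set (Fin d) → EReal)
    (c : Set (Fin d)) : EReal :=
  ⨆ c', ⨆ (_ : IsSCC r c' ∧ sccReach r c c'), γ c'

/-- The set of nodes `H_c = {c}` : nodes `i` with `c → i → c̃` for some s.c.c. `c̃`
realizing `γ^{(c̃)} = γ^{[c]}`. -/
def Hset {d : ℕ} (r : Fin d → Fin d → Prop) (γ : Set (Fin d) → EReal)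
    (c : Set (Fin d)) : Set (Fin d) :=
  {i | ∃ ct, IsSCC r ct ∧ (∃ j ∈ c, Relation.ReflTransGen r j i) ∧ nodeReach r i ct ∧
    γ ct = gammaBrack r γ c}

/-- `max { γ^{(c)} : c s.c.c. with i → c }`. -/
def limFormula {d : ℕ} (r : Fin d → Fin d → Prop) (γ : Set (Fin d) → EReal) (i : Fin d) : EReal :=
  ⨆ c, ⨆ (_ : IsSCC r c ∧ nodeReach r i c), γ c

lemma aux_upper {d : ℕ} (v : Fin d → EReal) (h : ∀ i, v i ≠ ⊤) : ∃ C : ℝ, ∀ i, v i ≤ (C : EReal) := by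
  obtain ⟨C, hC⟩ := (Set.finite_range (fun i => (v i).toReal)).bddAbove
  refine ⟨C, fun i => (EReal.le_coe_toReal (h i)).trans ?_⟩
  exact_mod_cast hC ⟨i, rfl⟩

lemma aux_lower {d : ℕ} (v : Fin d → EReal) (h : ∀ i, v i ≠ ⊥) :
    ∃ C : ℝ, ∀ i, 0 ≤ v i + (C : EReal) := by
  obtain ⟨C, hC⟩ := (Set.finite_range (fun i => (v i).toReal)).bddBelow
  refine ⟨-C, fun i => ?_⟩
  have h1 : (C : EReal) ≤ v i := by
    refine le_trans ?_ (EReal.coe_toReal_le (h i))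
    exact_mod_cast hC ⟨i, rfl⟩
  calc (0 : EReal) = (C : EReal) + ((-C : ℝ) : EReal) := by
        rw [← EReal.coe_add]; simp
    _ ≤ _ := by gcongr

lemma mpVec_ne_top {d : ℕ} (M : Fin d → Fin d → EReal) (v : Fin d → EReal)
    (hM : ∀ i j, M i j ≠ ⊤) (hv : ∀ i, v i ≠ ⊤) (i : Fin d) : mpVec M v i ≠ ⊤ := by
  haveI : Nonempty (Fin d) := ⟨i⟩
  obtain ⟨j, hj⟩ := exists_eq_ciSup_of_finite (f := fun j => M i j + v j)
  unfold mpVec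
  rw [← hj]
  exact EReal.add_ne_top (hM i j) (hv j)

lemma xvec_ne_top {d : ℕ} (f : ℕ → Fin d → Fin d → EReal) (hf : ∀ n i j, f n i j ≠ ⊤) (n : ℕ) :
    ∀ i, xvec f n i ≠ ⊤ := by
  induction n with
  | zero => intro i; simp [xvec]
  | succ n ih => exact fun i => mpVec_ne_top _ _ (hf n) ih i

lemma mpVec_le {d : ℕ} (M : Fin d → Fin d → EReal) (u v : Fin d → EReal) (C : EReal)
    (h : ∀ i, u i ≤ v i + C) (i : Fin d) : mpVec M u i ≤ mpVec M v i + C := by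
  refine iSup_le fun j => ?_
  calc M i j + u j ≤ M i j + (v j + C) := by gcongr; exact h j
    _ = (M i j + v j) + C := (add_assoc _ _ _).symm
    _ ≤ _ := by gcongr; exact le_iSup (fun j => M i j + v j) j

lemma xshift_le {d : ℕ} (f : ℕ → Fin d → Fin d → EReal) (C : EReal)
    (h : ∀ i, xvec f 1 i ≤ C) (n : ℕ) :
    ∀ i, xvec f (n + 1) i ≤ xvec (fun m => f (m + 1)) n i + C := by
  induction n with
  | zero => intro i; simpa [xvec] using h i
  | succ n ih => exact fun i => mpVec_le _ _ _ _ ih i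

lemma xshift_ge {d : ℕ} (f : ℕ → Fin d → Fin d → EReal) (C : EReal)
    (h : ∀ i, 0 ≤ xvec f 1 i + C) (n : ℕ) :
    ∀ i, xvec (fun m => f (m + 1)) n i ≤ xvec f (n + 1) i + C := by
  induction n with
  | zero => intro i; simpa [xvec] using h i
  | succ n ih => exact fun i => mpVec_le _ _ _ _ ih i

lemma scale_le {n : ℕ} {x y : EReal} (h : x ≤ y) : mpScale n x ≤ mpScale n y := by
  unfold mpScale
  apply mul_le_mul_of_nonneg_left h
  exact_mod_cast inv_nonneg.2 (Nat.cast_nonneg n)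

lemma scale_lt {n : ℕ} (hn : 0 < n) {x : EReal} {a : ℝ} (h : mpScale n x < a) :
    x < ((a * n : ℝ) : EReal) := by
  have hn' : (0 : ℝ) < n := by exact_mod_cast hn
  unfold mpScale at h
  induction x with
  | bot => exact EReal.bot_lt_coe _
  | top => rw [EReal.coe_mul_top_of_pos (inv_pos.2 hn')] at h; exact absurd h (by simp)
  | coe x =>
    rw [← EReal.coe_mul, EReal.coe_lt_coe_iff, inv_mul_lt_iff₀ hn'] at h
    rw [EReal.coe_lt_coe_iff]; linarith

lemma lt_scale {n : ℕ} (hn : 0 < n) {x : EReal} {a : ℝ} (h : (a : EReal) < mpScale n x) :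
    ((a * n : ℝ) : EReal) < x := by
  have hn' : (0 : ℝ) < n := by exact_mod_cast hn
  unfold mpScale at h
  induction x with
  | top => exact EReal.coe_lt_top _
  | bot => rw [EReal.coe_mul_bot_of_pos (inv_pos.2 hn')] at h; exact absurd h (by simp)
  | coe x =>
    rw [← EReal.coe_mul, EReal.coe_lt_coe_iff, lt_inv_mul_iff₀ hn'] at h
    rw [EReal.coe_lt_coe_iff]; linarith

lemma lim_le {u w : ℕ → EReal} {a b : EReal} (C : ℝ) (p q : ℕ)
    (hu : Tendsto (fun n => mpScale n (u n)) atTop (𝓝 a))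
    (hw : Tendsto (fun n => mpScale n (w n)) atTop (𝓝 b))
    (h : ∃ᶠ n in atTop, u (n + p) ≤ w (n + q) + (C : EReal)) : a ≤ b := by
  have h1 : Tendsto (fun n => mpScale (n + p) (u (n + p))) atTop (𝓝 a) :=
    hu.comp (tendsto_add_atTop_nat p)
  have h2 : Tendsto (fun n => mpScale (n + q) (w (n + q))) atTop (𝓝 b) :=
    hw.comp (tendsto_add_atTop_nat q)
  have hinv : Tendsto (fun n : ℕ => (((n + p : ℕ) : ℝ))⁻¹) atTop (𝓝 0) :=
    (tendsto_inv_atTop_nhds_zero_nat (𝕜 := ℝ)).comp (tendsto_add_atTop_nat p)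
  have hr : Tendsto (fun n : ℕ => ((((n + q : ℕ) : ℝ) * (((n + p : ℕ) : ℝ))⁻¹ : ℝ) : EReal)) atTop
      (𝓝 ((1 : ℝ) : EReal)) := by
    apply (continuous_coe_real_ereal.tendsto _).comp
    have : Tendsto (fun n : ℕ => 1 + ((q : ℝ) - p) * (((n + p : ℕ) : ℝ))⁻¹) atTop
        (𝓝 (1 + ((q : ℝ) - p) * 0)) := (hinv.const_mul _).const_add _
    rw [mul_zero, add_zero] at this
    refine this.congr' ?_
    filter_upwards [eventually_gt_atTop 0] with n hn
    have : ((n + p : ℕ) : ℝ) ≠ 0 := by positivity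
    field_simp
    push_cast
    ring
  have hc : Tendsto (fun n : ℕ => (((((n + p : ℕ) : ℝ))⁻¹ * C : ℝ) : EReal)) atTop
      (𝓝 ((0 : ℝ) : EReal)) := by
    apply (continuous_coe_real_ereal.tendsto _).comp
    simpa using hinv.mul_const C
  have h3 := EReal.Tendsto.mul hr h2 (by simp) (by simp) (.inl (EReal.coe_ne_bot _))
    (.inl (EReal.coe_ne_top _))
  have h4 := (EReal.continuousAt_add (p := (((1 : ℝ) : EReal) * b, ((0 : ℝ) : EReal)))
    (by simp) (by simp)).tendsto.comp (h3.prodMk_nhds hc)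
  simp only [EReal.coe_one, one_mul, EReal.coe_zero, add_zero] at h4
  refine le_of_tendsto_of_tendsto_of_frequently h1 h4 ?_
  refine (h.and_eventually (eventually_gt_atTop 0)).mono ?_
  rintro n ⟨hn, hn0⟩
  refine (scale_le hn).trans (le_of_eq ?_)
  have hp : (0 : ℝ) ≤ (((n + p : ℕ) : ℝ))⁻¹ := by positivity
  have hq : ((n + q : ℕ) : ℝ) ≠ 0 := by positivity
  simp only [Function.comp_apply]
  unfold mpScale
  rw [EReal.left_distrib_of_nonneg_of_ne_top (by exact_mod_cast hp) (EReal.coe_ne_top _),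
    ← mul_assoc, ← EReal.coe_mul, ← EReal.coe_mul]
  congr 3
  field_simp

lemma ae_iter {Ω : Type*} [MeasurableSpace Ω] {μ : Measure Ω} {θ : Ω → Ω}
    (hθ : MeasurePreserving θ μ μ) {p : Ω → Prop} (h : ∀ᵐ ω ∂μ, p ω) :
    ∀ᵐ ω ∂μ, ∀ n : ℕ, p (θ^[n] ω) :=
  ae_all_iff.2 fun n => (hθ.iterate n).quasiMeasurePreserving.ae h

lemma meas_x {d : ℕ} {Ω : Type*} [MeasurableSpace Ω] {θ : Ω → Ω} (hθ : Measurable θ)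
    {A : Ω → Fin d → Fin d → EReal} (hA : Measurable A) (n : ℕ) :
    ∀ i, Measurable fun ω => xvec (fun m => A (θ^[m] ω)) n i := by
  induction n with
  | zero => intro i; exact measurable_const
  | succ n ih =>
    intro i
    refine Measurable.iSup fun j => Measurable.add ?_ (ih j)
    have := hA.comp (hθ.iterate n)
    exact (measurable_pi_apply j).comp ((measurable_pi_apply i).comp this)

/-- the limit is deterministic -/
lemma determ {d : ℕ} {Ω : Type*} [MeasurableSpace Ω] (μ : Measure Ω) [IsProbabilityMeasure μ]
    (θ : Ω → Ω) (hθ : Ergodic θ μ)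
    (A : Ω → Fin d → Fin d → EReal) (hA : Measurable A)
    (hnotop : ∀ ω i j, A ω i j ≠ ⊤)
    (hrow : ∀ᵐ ω ∂μ, ∀ i, ∃ j, A ω i j ≠ ⊥)
    (L : Ω → Fin d → EReal)
    (hL : ∀ᵐ ω ∂μ, ∀ i, Tendsto (fun n => mpScale n (xvec (fun m => A (θ^[m] ω)) n i))
      atTop (𝓝 (L ω i))) :
    ∃ l : Fin d → EReal, ∀ᵐ ω ∂μ, ∀ i, L ω i = l i := by
  have key : ∀ i, ∃ c, (fun ω => L ω i) =ᵐ[μ] Function.const Ω c := by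
    intro i
    haveI : TopologicalSpace.MetrizableSpace EReal :=
      TopologicalSpace.metrizableSpace_of_t3_secondCountable EReal
    refine hθ.ae_eq_const_of_ae_eq_comp₀ (AEMeasurable.nullMeasurable ?_) ?_
    · refine aemeasurable_of_tendsto_metrizable_ae' (f := fun n ω =>
        mpScale n (xvec (fun m => A (θ^[m] ω)) n i)) (fun n => ?_) (hL.mono fun ω h => h i)
      exact ((meas_x hθ.measurable hA n i).const_mul _).aemeasurable
    · filter_upwards [hL, hθ.toMeasurePreserving.quasiMeasurePreserving.ae hL, hrow] with ω h1 h2 h3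
      have h1 := h1 i
      have h2 := h2 i
      have hfin : ∀ k, xvec (fun m => A (θ^[m] ω)) 1 k ≠ ⊥ := by
        intro k
        obtain ⟨j, hj⟩ := h3 k
        intro hb
        have : A ω k j + 0 ≤ ⊥ := by
          rw [← hb]; exact le_iSup (fun j => A ω k j + (0 : EReal)) j
        rw [add_zero] at this
        exact hj (le_bot_iff.1 this)
      obtain ⟨C, hC⟩ := aux_upper _ (xvec_ne_top (fun m => A (θ^[m] ω))
        (fun n => hnotop _) 1)
      obtain ⟨D, hD⟩ := aux_lower _ hfin
      apply le_antisymm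
      · exact lim_le D 0 1 h2 h1 (Eventually.of_forall fun n => xshift_ge _ _ hD n i).frequently
      · exact lim_le C 1 0 h1 h2 (Eventually.of_forall fun n => xshift_le _ _ hC n i).frequently
  choose l hl using key
  exact ⟨l, ae_all_iff.2 hl⟩

lemma arc_le {d : ℕ} {Ω : Type*} [MeasurableSpace Ω] (μ : Measure Ω) [IsProbabilityMeasure μ]
    (θ : Ω → Ω) (hθ : MeasurePreserving θ μ μ)
    (A : Ω → Fin d → Fin d → EReal) (hA : Measurable A)
    (l : Fin d → EReal)
    (hl : ∀ᵐ ω ∂μ, ∀ i, Tendsto (fun n => mpScale n (xvec (fun m => A (θ^[m] ω)) n i))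
      atTop (𝓝 (l i))) (i j : Fin d) (hij : arcRel μ A i j) : l j ≤ l i := by
  have hm : Measurable fun ω => A ω i j :=
    (measurable_pi_apply j).comp ((measurable_pi_apply i).comp hA)
  have : ∃ M : ℕ, μ {ω | ((-(M : ℝ) : ℝ) : EReal) ≤ A ω i j} ≠ 0 := by
    by_contra! hcon
    apply hij
    refine measure_mono_null ?_ (measure_iUnion_null hcon)
    intro ω hω
    rw [Set.mem_iUnion]
    obtain ⟨M, hM⟩ := exists_nat_ge (-(A ω i j).toReal)
    refine ⟨M, le_trans ?_ (EReal.coe_toReal_le hω)⟩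
    exact_mod_cast (by linarith : -(M : ℝ) ≤ (A ω i j).toReal)
  obtain ⟨M, hM⟩ := this
  have hs : MeasurableSet {ω | ((-(M : ℝ) : ℝ) : EReal) ≤ A ω i j} :=
    measurableSet_le measurable_const hm
  have hrec := hθ.conservative.ae_mem_imp_frequently_image_mem hs.nullMeasurableSet
  obtain ⟨ω, hω, h1, h2⟩ : ∃ ω, ω ∈ {ω | ((-(M : ℝ) : ℝ) : EReal) ≤ A ω i j} ∧
      (ω ∈ {ω | ((-(M : ℝ) : ℝ) : EReal) ≤ A ω i j} →
        ∃ᶠ n in atTop, θ^[n] ω ∈ {ω | ((-(M : ℝ) : ℝ) : EReal) ≤ A ω i j}) ∧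
      ∀ i, Tendsto (fun n => mpScale n (xvec (fun m => A (θ^[m] ω)) n i)) atTop (𝓝 (l i)) := by
    by_contra! hcon
    apply hM
    rw [measure_eq_zero_iff_ae_notMem]
    filter_upwards [hrec, hl] with ω ha hb hc
    obtain ⟨i, hi⟩ := hcon ω hc ha
    exact hi (hb i)
  refine lim_le (M : ℝ) 0 1 (h2 j) (h2 i) ((h1 hω).mono fun n hn => ?_)
  have hn : ((-(M : ℝ) : ℝ) : EReal) ≤ A (θ^[n] ω) i j := hn
  have h3 : A (θ^[n] ω) i j + xvec (fun m => A (θ^[m] ω)) n j ≤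
      xvec (fun m => A (θ^[m] ω)) (n + 1) i :=
    le_iSup (fun j => A (θ^[n] ω) i j + xvec (fun m => A (θ^[m] ω)) n j) j
  calc xvec (fun m => A (θ^[m] ω)) n j
      = ((-(M : ℝ) : ℝ) : EReal) + xvec (fun m => A (θ^[m] ω)) n j + ((M : ℝ) : EReal) := by
        rw [add_right_comm, ← EReal.coe_add]; simp
    _ ≤ A (θ^[n] ω) i j + xvec (fun m => A (θ^[m] ω)) n j + ((M : ℝ) : EReal) := by gcongr
    _ ≤ _ := by gcongr

lemma restrict_le {d : ℕ} (c : Set (Fin d)) (f : ℕ → Fin d → Fin d → EReal) (n : ℕ) :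
    ∀ i, xvec (fun m => mpRestrict c (f m)) n i ≤ xvec f n i := by
  induction n with
  | zero => intro i; exact le_rfl
  | succ n ih =>
    intro i
    refine iSup_mono fun j => ?_
    refine add_le_add ?_ (ih j)
    simp only [mpRestrict]
    split_ifs
    · exact le_rfl
    · exact bot_le

lemma scc_le {d : ℕ} (c : Set (Fin d)) (hc : c.Nonempty)
    (f : ℕ → Fin d → Fin d → EReal) (l : Fin d → EReal) (g b : EReal)
    (hl : ∀ i, Tendsto (fun n => mpScale n (xvec f n i)) atTop (𝓝 (l i)))
    (hg : Tendsto (fun n => mpScale n (⨆ i, ⨆ (_ : i ∈ c),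
      xvec (fun m => mpRestrict c (f m)) n i)) atTop (𝓝 g))
    (hb : ∀ j ∈ c, l j ≤ b) : g ≤ b := by
  have h1 : ∀ n, ∃ j, j ∈ c ∧ (⨆ i, ⨆ (_ : i ∈ c), xvec (fun m => mpRestrict c (f m)) n i)
      ≤ xvec f n j := by
    intro n
    haveI : Nonempty c := hc.to_subtype
    obtain ⟨j, hj⟩ := exists_eq_ciSup_of_finite
      (f := fun j : c => xvec (fun m => mpRestrict c (f m)) n j)
    refine ⟨j, j.2, ?_⟩
    rw [iSup_subtype'] 
    rw [← hj]
    exact restrict_le c f n j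
  have h2 : ∃ j, ∃ᶠ n in atTop, j ∈ c ∧ (⨆ i, ⨆ (_ : i ∈ c),
      xvec (fun m => mpRestrict c (f m)) n i) ≤ xvec f n j := by
    by_contra hcon
    rw [not_exists] at hcon
    obtain ⟨n, hn⟩ := (eventually_all.2 fun j => not_frequently.1 (hcon j)).exists
    obtain ⟨j, hj⟩ := h1 n
    exact hn j hj
  obtain ⟨j, hj⟩ := h2
  obtain ⟨n, hn⟩ := hj.exists
  refine le_trans ?_ (hb j hn.1)
  exact lim_le 0 0 0 hg (hl j) (hj.mono fun n hn => by simpa using hn.2)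

lemma growth {Ω : Type*} [MeasurableSpace Ω] (μ : Measure Ω) [IsProbabilityMeasure μ]
    (θ : Ω → Ω) (hθ : MeasurePreserving θ μ μ) (g : Ω → ℝ) (hg : Integrable g μ)
    (hm : Measurable g) (h0 : 0 ≤ g) (ε : ℝ) (hε : 0 < ε) :
    ∀ᵐ ω ∂μ, ∀ᶠ n : ℕ in atTop, g (θ^[n] ω) ≤ ε * n := by
  letI : MeasureSpace Ω := ⟨μ⟩
  haveI : IsProbabilityMeasure (volume : Measure Ω) := ‹IsProbabilityMeasure μ›
  have h1 := tsum_prob_mem_Ioi_lt_top (Ω := Ω) (X := fun ω => g ω / ε) (hg.div_const ε)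
    (fun ω => div_nonneg (h0 ω) hε.le)
  have hms : ∀ j : ℕ, MeasurableSet {ω | g ω / ε ∈ Set.Ioi (j : ℝ)} := fun j =>
    (hm.div_const ε) measurableSet_Ioi
  have h2 : (∑' j : ℕ, μ ((θ^[j]) ⁻¹' {ω | g ω / ε ∈ Set.Ioi (j : ℝ)})) ≠ ⊤ := by
    have : ∀ j : ℕ, μ ((θ^[j]) ⁻¹' {ω | g ω / ε ∈ Set.Ioi (j : ℝ)})
        = μ {ω | g ω / ε ∈ Set.Ioi (j : ℝ)} := fun j =>
      (hθ.iterate j).measure_preimage (hms j).nullMeasurableSet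
    simp_rw [this]
    exact h1.ne
  filter_upwards [ae_eventually_notMem h2] with ω hω
  filter_upwards [hω] with n hn
  simp only [Set.mem_preimage, Set.mem_setOf_eq, Set.mem_Ioi, not_lt] at hn
  rw [div_le_iff₀ hε] at hn
  linarith

lemma exit_small {d : ℕ} {Ω : Type*} [MeasurableSpace Ω] (μ : Measure Ω) [IsProbabilityMeasure μ]
    (θ : Ω → Ω) (hθ : MeasurePreserving θ μ μ)
    (A : Ω → Fin d → Fin d → EReal) (hA : Measurable A)
    (hnotop : ∀ ω i j, A ω i j ≠ ⊤)
    (hint : Integrable (fun ω => ((⨆ i, ⨆ j, A ω i j) ⊔ 0).toReal) μ)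
    (l : Fin d → EReal)
    (hl : ∀ᵐ ω ∂μ, ∀ i, Tendsto (fun n => mpScale n (xvec (fun m => A (θ^[m] ω)) n i))
      atTop (𝓝 (l i))) (k j : Fin d) (hkj : l j < l k) :
    ∀ᵐ ω ∂μ, ∀ᶠ n in atTop, A (θ^[n] ω) k j + xvec (fun m => A (θ^[m] ω)) n j <
      xvec (fun m => A (θ^[m] ω)) (n + 1) k := by
  obtain ⟨a, ha1, ha2⟩ := EReal.lt_iff_exists_real_btwn.1 hkj
  obtain ⟨b, hb1, hb2⟩ := EReal.lt_iff_exists_real_btwn.1 ha2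
  have hab : a < b := EReal.coe_lt_coe_iff.1 hb1
  have hgm : Measurable (fun ω => ((⨆ i, ⨆ j, A ω i j) ⊔ 0).toReal) := by
    refine Measurable.ereal_toReal (Measurable.sup ?_ measurable_const)
    exact Measurable.iSup fun i => Measurable.iSup fun j =>
      (measurable_pi_apply j).comp ((measurable_pi_apply i).comp hA)
  have hg0 : 0 ≤ (fun ω => ((⨆ i, ⨆ j, A ω i j) ⊔ 0).toReal) := fun ω =>
    EReal.toReal_nonneg le_sup_right
  have hAg : ∀ ω, A ω k j ≤ ((((⨆ i, ⨆ j, A ω i j) ⊔ 0).toReal : ℝ) : EReal) := by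
    intro ω
    haveI : Nonempty (Fin d) := ⟨k⟩
    refine le_trans ?_ (EReal.le_coe_toReal ?_)
    · exact le_sup_of_le_left (le_iSup_of_le k (le_iSup (fun j => A ω k j) j))
    · obtain ⟨i', hi⟩ := exists_eq_ciSup_of_finite (f := fun i => ⨆ j, A ω i j)
      obtain ⟨j', hj⟩ := exists_eq_ciSup_of_finite (f := fun j => A ω i' j)
      rw [← hi, ← hj]
      rcases le_total (A ω i' j') 0 with h | h
      · rw [sup_eq_right.2 h]; simp
      · rw [sup_eq_left.2 h]; exact hnotop _ _ _
  have hε : 0 < (b - a) / 2 := by linarith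
  filter_upwards [hl, growth μ θ hθ _ hint hgm hg0 _ hε] with ω h1 h2
  have h3 := (h1 j).eventually_lt_const ha1
  have h4 := ((h1 k).comp (tendsto_add_atTop_nat 1)).eventually_const_lt hb2
  have h5 : ∀ᶠ n : ℕ in atTop, -b / ((b - a) / 2) ≤ (n : ℝ) :=
    tendsto_natCast_atTop_atTop.eventually_ge_atTop _
  filter_upwards [h2, h3, h4, h5, eventually_gt_atTop 0] with n h2 h3 h4 h5 hn
  have h3 := scale_lt hn h3
  have h4 := lt_scale (Nat.succ_pos n) h4
  rw [div_le_iff₀ hε] at h5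
  refine lt_of_le_of_lt ?_ h4
  calc A (θ^[n] ω) k j + xvec (fun m => A (θ^[m] ω)) n j
      ≤ (((b - a) / 2 * n : ℝ) : EReal) + ((a * n : ℝ) : EReal) := by
        refine add_le_add ((hAg _).trans ?_) h3.le
        exact_mod_cast h2
    _ ≤ _ := by
        rw [← EReal.coe_add, EReal.coe_le_coe_iff]
        push_cast
        nlinarith

lemma upper_scc {d : ℕ} (c : Set (Fin d)) (f : ℕ → Fin d → Fin d → EReal)
    (hf : ∀ n i j, f n i j ≠ ⊤) (l : Fin d → EReal) (g : EReal)
    (hl : ∀ i, Tendsto (fun n => mpScale n (xvec f n i)) atTop (𝓝 (l i)))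
    (hg : ∀ p, Tendsto (fun n => mpScale n (⨆ i, ⨆ (_ : i ∈ c),
      xvec (fun m => mpRestrict c (f (m + p))) n i)) atTop (𝓝 g))
    (hex : ∀ k ∈ c, ∀ j ∉ c, ∀ᶠ n in atTop, f n k j + xvec f n j < xvec f (n + 1) k)
    (i : Fin d) (hi : i ∈ c) : l i ≤ g := by
  haveI : Nonempty (Fin d) := ⟨i⟩
  have h1 : ∀ᶠ n in atTop, ∀ k, k ∈ c → ∀ j, j ∉ c → f n k j + xvec f n j < xvec f (n + 1) k := by
    refine eventually_all.2 fun k => ?_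
    by_cases hk : k ∈ c
    · have : ∀ᶠ n in atTop, ∀ j, j ∉ c → f n k j + xvec f n j < xvec f (n + 1) k := by
        refine eventually_all.2 fun j => ?_
        by_cases hj : j ∈ c
        · exact Eventually.of_forall fun n h => absurd hj h
        · exact (hex k hk j hj).mono fun n h _ => h
      exact this.mono fun n h _ => h
    · exact Eventually.of_forall fun n h => absurd h hk
  obtain ⟨p, hp⟩ := eventually_atTop.1 h1
  obtain ⟨C, hC⟩ := aux_upper _ (xvec_ne_top f hf p)
  have h2 : ∀ m, ∀ k ∈ c, xvec f (m + p) k ≤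
      xvec (fun m => mpRestrict c (f (m + p))) m k + (C : EReal) := by
    intro m
    induction m with
    | zero => intro k hk; simpa [xvec] using hC k
    | succ m ih =>
      intro k hk
      obtain ⟨j, hj⟩ := exists_eq_ciSup_of_finite
        (f := fun j => f (m + p) k j + xvec f (m + p) j)
      have hj' : f (m + p) k j + xvec f (m + p) j = xvec f (m + p + 1) k := hj
      have hjc : j ∈ c := by
        by_contra hjc
        exact absurd hj' (hp (m + p) (by omega) k hk j hjc).ne
      have e : m + 1 + p = m + p + 1 := by omega
      rw [e, ← hj']
      calc f (m + p) k j + xvec f (m + p) j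
          ≤ f (m + p) k j + (xvec (fun m => mpRestrict c (f (m + p))) m j + (C : EReal)) := by
            gcongr; exact ih j hjc
        _ = (mpRestrict c (f (m + p)) k j + xvec (fun m => mpRestrict c (f (m + p))) m j)
              + (C : EReal) := by
            rw [← add_assoc]; simp [mpRestrict, hk, hjc]
        _ ≤ _ := by
            gcongr
            exact le_iSup (fun j => mpRestrict c (f (m + p)) k j +
              xvec (fun m => mpRestrict c (f (m + p))) m j) j
  refine lim_le C p 0 (hl i) (hg p) (Eventually.of_forall fun m => ?_).frequently
  refine (h2 m i hi).trans ?_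
  gcongr
  exact le_iSup₂_of_le i hi le_rfl

/-- **Theorem (necessary condition, left products).**
If `(A(n))_{n∈ℤ}` is stationary ergodic, a.s. with a finite entry on each row, the positive
part of `max_{ij} A_{ij}(0)` integrable, and `(1/n) x(n,0)` converges a.s. (to a possibly
random vector `L`), then the limit is deterministic: a.s.
`L ω i = max { γ^{(c)} : i → c }` for every `i`. -/
theorem x_limit_deterministic_and_formula
    {d : ℕ} {Ω : Type*} [MeasurableSpace Ω] (μ : Measure Ω) [IsProbabilityMeasure μ]
    (θ θ' : Ω → Ω) (hθ : Ergodic θ μ)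
    (hinv : ∀ ω, θ (θ' ω) = ω ∧ θ' (θ ω) = ω)
    (A : Ω → Fin d → Fin d → EReal) (hA : Measurable A)
    (hnotop : ∀ ω i j, A ω i j ≠ ⊤)
    (hrow : ∀ᵐ ω ∂μ, ∀ i, ∃ j, A ω i j ≠ ⊥)
    (hint : Integrable (fun ω => ((⨆ i, ⨆ j, A ω i j) ⊔ 0).toReal) μ)
    (γ : Set (Fin d) → EReal)
    (hγ : ∀ c : Set (Fin d), IsSCC (arcRel μ A) c →
      ∀ᵐ ω ∂μ, Tendsto
        (fun n => mpScale n (⨆ i, ⨆ (_ : i ∈ c), xvec (fun m => mpRestrict c (A (θ^[m] ω))) n i))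
        atTop (𝓝 (γ c)))
    (L : Ω → Fin d → EReal)
    (hL : ∀ᵐ ω ∂μ, ∀ i, Tendsto (fun n => mpScale n (xvec (fun m => A (θ^[m] ω)) n i))
      atTop (𝓝 (L ω i))) :
    ∀ i, ∀ᵐ ω ∂μ, L ω i = limFormula (arcRel μ A) γ i := by
  obtain ⟨l, hl⟩ := determ μ θ hθ A hA hnotop hrow L hL
  have hθm := hθ.toMeasurePreserving
  have hlim : ∀ᵐ ω ∂μ, ∀ i, Tendsto (fun n => mpScale n (xvec (fun m => A (θ^[m] ω)) n i))
      atTop (𝓝 (l i)) := by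
    filter_upwards [hL, hl] with ω h1 h2 i
    rw [← h2 i]; exact h1 i
  have hreach : ∀ i j, Relation.ReflTransGen (arcRel μ A) i j → l j ≤ l i := by
    intro i j h
    induction h with
    | refl => exact le_rfl
    | tail _ h ih => exact (arc_le μ θ hθm A hA l hlim _ _ h).trans ih
  have hlow : ∀ i, limFormula (arcRel μ A) γ i ≤ l i := by
    intro i
    refine iSup₂_le ?_
    rintro c ⟨hc, j, hj, hij⟩
    obtain ⟨ω, h1, h2⟩ := (hlim.and (hγ c hc)).exists
    refine scc_le c ⟨j, hj⟩ _ l (γ c) (l i) h1 h2 fun k hk => ?_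
    obtain ⟨r, rfl⟩ := hc
    exact hreach _ _ (hij.trans (hj.2.trans hk.1))
  have hup : ∀ n : ℕ, ∀ i, Set.ncard {j | Relation.ReflTransGen (arcRel μ A) i j} = n →
      l i ≤ limFormula (arcRel μ A) γ i := by
    intro n
    induction n using Nat.strong_induction_on with
    | _ n ih =>
    intro i hn
    by_cases hcase : ∃ j, Relation.ReflTransGen (arcRel μ A) i j ∧
        ¬ Relation.ReflTransGen (arcRel μ A) j i ∧ l i ≤ l j
    · obtain ⟨j, hij, hji, hlij⟩ := hcase
      have hss : {k | Relation.ReflTransGen (arcRel μ A) j k} ⊂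
          {k | Relation.ReflTransGen (arcRel μ A) i k} := by
        refine ⟨fun k hk => hij.trans hk, fun hsub => hji (hsub Relation.ReflTransGen.refl)⟩
      have := ih _ (hn ▸ Set.ncard_lt_ncard hss (Set.toFinite _)) j rfl
      refine hlij.trans (this.trans ?_)
      refine iSup₂_le ?_
      rintro c ⟨hc, k, hk, hjk⟩
      exact le_iSup₂_of_le (f := fun c (_ : IsSCC (arcRel μ A) c ∧ nodeReach (arcRel μ A) i c) => γ c)
        c ⟨hc, k, hk, hij.trans hjk⟩ le_rfl
    · push Not at hcase
      set c : Set (Fin d) := {j | Relation.ReflTransGen (arcRel μ A) i j ∧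
        Relation.ReflTransGen (arcRel μ A) j i} with hcdef
      have hc : IsSCC (arcRel μ A) c := ⟨i, rfl⟩
      have hic : i ∈ c := ⟨.refl, .refl⟩
      refine le_trans ?_ (le_iSup₂_of_le
        (f := fun c (_ : IsSCC (arcRel μ A) c ∧ nodeReach (arcRel μ A) i c) => γ c)
        c ⟨hc, i, hic, .refl⟩ le_rfl)
      rcases eq_or_ne (l i) ⊥ with hbot | hbot
      · rw [hbot]; exact bot_le
      have hex : ∀ᵐ ω ∂μ, ∀ k j, k ∈ c → j ∉ c → ∀ᶠ n in atTop,
          A (θ^[n] ω) k j + xvec (fun m => A (θ^[m] ω)) n j <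
            xvec (fun m => A (θ^[m] ω)) (n + 1) k := by
        refine ae_all_iff.2 fun k => ae_all_iff.2 fun j => ?_
        by_cases hk : k ∈ c
        swap
        · exact ae_of_all _ fun ω h => absurd h hk
        by_cases hj : j ∈ c
        · exact ae_of_all _ fun ω _ h => absurd hj h
        have hki : l i ≤ l k := hreach _ _ hk.2
        by_cases harc : arcRel μ A k j
        · have hij : Relation.ReflTransGen (arcRel μ A) i j := hk.1.tail harc
          have hlt := hcase j hij (fun h => hj ⟨hij, h⟩)
          exact (exit_small μ θ hθm A hA hnotop hint l hlim k j (hlt.trans_le hki)).mono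
            fun ω h _ _ => h
        · have hz : ∀ᵐ ω ∂μ, A ω k j = ⊥ := by
            rw [ae_iff]; exact not_not.1 harc
          filter_upwards [ae_iter hθm hz, hlim] with ω h1 h2 _ _
          have hkb : ⊥ < l k := (bot_lt_iff_ne_bot.2 hbot).trans_le hki
          obtain ⟨a, -, ha⟩ := EReal.lt_iff_exists_real_btwn.1 hkb
          have h4 := ((h2 k).comp (tendsto_add_atTop_nat 1)).eventually_const_lt ha
          filter_upwards [h4] with n hn
          rw [h1 n, EReal.bot_add]
          exact bot_le.trans_lt (lt_scale (Nat.succ_pos n) hn)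
      obtain ⟨ω, h1, h2, h3⟩ := (hlim.and ((ae_iter hθm (hγ c hc)).and hex)).exists
      refine upper_scc c (fun m => A (θ^[m] ω)) (fun n => hnotop _) l (γ c) h1 ?_
        (fun k hk j hj => h3 k j hk hj) i hic
      intro p
      have := h2 p
      simp only [← Function.iterate_add_apply] at this
      exact this
  intro i
  filter_upwards [hl] with ω hω
  rw [hω i]
  exact le_antisymm (hup _ i rfl) (hlow i)
end
end

section
/- Let (A(n))_{n∈ℕ} be a stationary and ergodic sequence of random d×d matrices with entries in ℝ_max such that the positive part of max_{ij} A_{ij}(0) is integrable. Then γ(A) = max{ γ^{(c)} : c a strongly connected component of 𝒢(A) }. -/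
open Filter MeasureTheory ProbabilityTheory Topology

noncomputable section

theorem core_bound (n d K : ℕ) (w M g : ℕ → ℝ) (ρ : ℕ → ℕ) (a Mx : ℝ)
    (hw : ∀ m < n, w m ≤ M m) (hM0 : 0 ≤ Mx) (hMx : ∀ m < n, M m ≤ Mx)
    (hg : ∀ m, 0 ≤ g m) (hρd : ∀ m, ρ m ≤ d)
    (hmono : ∀ s k, s + k ≤ n → ρ s ≤ ρ (s + k))
    (hstep : ∀ s < n, (M s + |a| ≤ g s) ∨ ∃ k, 1 ≤ k ∧ k ≤ K ∧ s + k ≤ n ∧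
      ((∑ m ∈ Finset.Ico s (s + k), w m ≤ k * a) ∨ s + k = n ∨ ρ s < ρ (s + k))) :
    ∀ l s, s + l = n → ∑ m ∈ Finset.Ico s n, w m ≤
      a * l + ∑ m ∈ Finset.Ico s n, g m + ((d : ℝ) + 1 - ρ s) * (K * (Mx + |a|)) := by
  intro l
  have hD : 0 ≤ (K : ℝ) * (Mx + |a|) := by positivity
  induction l using Nat.strong_induction_on with
  | _ l ih =>
  intro s hs
  have hρ : (ρ s : ℝ) ≤ d := by exact_mod_cast hρd s
  have hcoef : 0 ≤ ((d : ℝ) + 1 - ρ s) * (K * (Mx + |a|)) := mul_nonneg (by linarith) hD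
  rcases Nat.eq_zero_or_pos l with rfl | hl
  · have : s = n := by omega
    subst this
    simpa using hcoef
  have hG : ∀ k, s + k ≤ n → 0 ≤ ∑ m ∈ Finset.Ico s (s + k), g m := fun k _ =>
    Finset.sum_nonneg fun m _ => hg m
  -- crude bound
  have hcr : ∀ k, k ≤ K → s + k ≤ n →
      ∑ m ∈ Finset.Ico s (s + k), w m ≤ a * k + K * (Mx + |a|) := by
    intro k hk hkn
    have h1 : ∑ m ∈ Finset.Ico s (s + k), w m ≤ ∑ m ∈ Finset.Ico s (s + k), Mx := by
      apply Finset.sum_le_sum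
      intro m hm
      rw [Finset.mem_Ico] at hm
      exact (hw m (by omega)).trans (hMx m (by omega))
    rw [Finset.sum_const, Nat.card_Ico, nsmul_eq_mul] at h1
    have h2 : ((s + k - s : ℕ) : ℝ) = k := by congr 1; omega
    rw [h2] at h1
    have h3 : (k : ℝ) ≤ K := by exact_mod_cast hk
    have h4 : 0 ≤ (k : ℝ) := by positivity
    have h5 : -|a| ≤ a := neg_abs_le a
    have h6 : (k : ℝ) * (Mx + |a|) ≤ K * (Mx + |a|) :=
      mul_le_mul_of_nonneg_right h3 (by positivity)
    nlinarith
  rcases hstep s (by omega) with hb | ⟨k, hk1, hkK, hkn, hk⟩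
  · have := ih (l - 1) (by omega) (s + 1) (by omega)
    rw [Finset.sum_eq_sum_Ico_succ_bot (by omega : s < n),
      Finset.sum_eq_sum_Ico_succ_bot (by omega : s < n)]
    have h1 : ((l - 1 : ℕ) : ℝ) = l - 1 := by push_cast [Nat.cast_sub hl]; simp
    rw [h1] at this
    have h2 : (ρ s : ℝ) ≤ ρ (s + 1) := by exact_mod_cast hmono s 1 (by omega)
    have h3 := hw s (by omega)
    have h5 : -|a| ≤ a := neg_abs_le a
    have h6 : ((d : ℝ) + 1 - ρ (s + 1)) * (K * (Mx + |a|)) ≤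
      ((d : ℝ) + 1 - ρ s) * (K * (Mx + |a|)) :=
      mul_le_mul_of_nonneg_right (by linarith) hD
    nlinarith
  · have hi := ih (l - k) (by omega) (s + k) (by omega)
    have h1 : ((l - k : ℕ) : ℝ) = l - k := by rw [Nat.cast_sub (by omega)]
    rw [h1] at hi
    have h2 : (ρ s : ℝ) ≤ ρ (s + k) := by exact_mod_cast hmono s k (by omega)
    have hc := hcr k hkK hkn
    have hg' := hG k hkn
    rw [← Finset.sum_Ico_consecutive w (by omega : s ≤ s + k) hkn,
      ← Finset.sum_Ico_consecutive g (by omega : s ≤ s + k) hkn]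
    rcases hk with hk | hk | hk
    · have h6 : ((d : ℝ) + 1 - ρ (s + k)) * (K * (Mx + |a|)) ≤
        ((d : ℝ) + 1 - ρ s) * (K * (Mx + |a|)) :=
        mul_le_mul_of_nonneg_right (by linarith) hD
      nlinarith
    · rw [hk]
      rw [hk] at hc hg'
      have h6 : 1 * (K * (Mx + |a|)) ≤
        ((d : ℝ) + 1 - ρ s) * (K * (Mx + |a|)) :=
        mul_le_mul_of_nonneg_right (by linarith) hD
      have : k = l := by omega
      subst this
      simp only [Finset.Ico_self, Finset.sum_empty]
      linarith
    · have h7 : (ρ s : ℝ) + 1 ≤ ρ (s + k) := by exact_mod_cast hk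
      have h6 : ((d : ℝ) + 1 - ρ (s + k) + 1) * (K * (Mx + |a|)) ≤
        ((d : ℝ) + 1 - ρ s) * (K * (Mx + |a|)) :=
        mul_le_mul_of_nonneg_right (by linarith) hD
      nlinarith

theorem xvec_path {d : ℕ} (f : ℕ → Fin d → Fin d → EReal) (hf : ∀ m i j, f m i j ≠ ⊤) :
    ∀ n i, xvec f n i ≠ ⊥ → ∃ (p : ℕ → Fin d) (w : ℕ → ℝ), p n = i ∧
      (∀ m < n, f m (p (m + 1)) (p m) = (w m : EReal)) ∧
      xvec f n i = ((∑ m ∈ Finset.range n, w m : ℝ) : EReal) := by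
  intro n
  induction n with
  | zero => intro i _; exact ⟨fun _ => i, fun _ => 0, rfl, by simp, by simp [xvec]⟩
  | succ n ih =>
    intro i hi
    have : Nonempty (Fin d) := ⟨i⟩
    obtain ⟨j, hj⟩ := exists_eq_ciSup_of_finite (f := fun j => f n i j + xvec f n j)
    have hx : xvec f (n + 1) i = f n i j + xvec f n j := by
      rw [show xvec f (n + 1) i = ⨆ j, f n i j + xvec f n j from rfl, ← hj]
    rw [hx] at hi
    have h1 : f n i j ≠ ⊥ := by intro h; simp [h] at hi
    have h2 : xvec f n j ≠ ⊥ := by intro h; simp [h] at hi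
    obtain ⟨p, w, hp, hw, hs⟩ := ih j h2
    refine ⟨Function.update p (n + 1) i, Function.update w n (f n i j).toReal, by simp, ?_, ?_⟩
    · intro m hm
      rcases Nat.lt_succ_iff_lt_or_eq.1 hm with h | rfl
      · rw [Function.update_of_ne (by omega), Function.update_of_ne (by omega),
          Function.update_of_ne (by omega)]
        exact hw m h
      · rw [Function.update_self, Function.update_self, Function.update_of_ne (by omega), hp,
          EReal.coe_toReal (hf _ _ _) h1]
    · rw [hx, hs, Finset.sum_range_succ, Function.update_self, EReal.coe_add,
        EReal.coe_toReal (hf _ _ _) h1, add_comm]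
      congr 2
      apply Finset.sum_congr rfl
      intro m hm
      rw [Finset.mem_range] at hm
      rw [Function.update_of_ne (by omega)]

theorem path_le_xvec {d : ℕ} (f : ℕ → Fin d → Fin d → EReal) (c : Set (Fin d))
    (p : ℕ → Fin d) (w : ℕ → ℝ) (s : ℕ) : ∀ k,
    (∀ m, m ≤ k → p (s + m) ∈ c) →
    (∀ m < k, f m (p (s + m + 1)) (p (s + m)) = (w (s + m) : EReal)) →
    ((∑ m ∈ Finset.Ico s (s + k), w m : ℝ) : EReal) ≤
      xvec (fun m => mpRestrict c (f m)) k (p (s + k)) := by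
  intro k
  induction k with
  | zero => intro _ _; simp [xvec]
  | succ k ih =>
    intro hc hw
    have := ih (fun m hm => hc m (by omega)) (fun m hm => hw m (by omega))
    rw [← add_assoc, Finset.sum_Ico_succ_top (by omega), EReal.coe_add, add_comm]
    refine le_trans ?_ (le_iSup (fun j => mpRestrict c (f k) (p (s + k + 1)) j +
      xvec (fun m => mpRestrict c (f m)) k j) (p (s + k)))
    refine add_le_add ?_ this
    rw [mpRestrict, if_pos ⟨hc (k + 1) le_rfl, hc k (by omega)⟩, hw k (by omega)]

theorem xvec_restrict_le {d : ℕ} (f : ℕ → Fin d → Fin d → EReal) (c : Set (Fin d)) : ∀ n i,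
    xvec (fun m => mpRestrict c (f m)) n i ≤ xvec f n i := by
  intro n
  induction n with
  | zero => intro i; exact le_rfl
  | succ n ih =>
    intro i
    refine iSup_mono fun j => add_le_add ?_ (ih j)
    show mpRestrict c (f n) i j ≤ f n i j
    unfold mpRestrict
    split_ifs <;> simp

theorem mpScale_mono (n : ℕ) {x y : EReal} (h : x ≤ y) : mpScale n x ≤ mpScale n y := by
  unfold mpScale
  exact mul_le_mul_of_nonneg_left h (by exact_mod_cast (by positivity : (0:ℝ) ≤ (n : ℝ)⁻¹))

theorem le_of_mpScale_lt {n : ℕ} (hn : 0 < n) {x : EReal} {a : ℝ} (h : mpScale n x < a) :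
    x ≤ ((n * a : ℝ) : EReal) := by
  unfold mpScale at h
  have hn' : (0:ℝ) < (n : ℝ) := by exact_mod_cast hn
  induction x using EReal.rec with
  | bot => exact bot_le
  | top => rw [EReal.coe_mul_top_of_pos (by positivity)] at h; simp at h
  | coe x =>
    rw [← EReal.coe_mul, EReal.coe_lt_coe_iff] at h
    rw [EReal.coe_le_coe_iff]
    rw [inv_mul_lt_iff₀ hn'] at h
    exact h.le

theorem measurable_xvec {Ω : Type*} [MeasurableSpace Ω] {d : ℕ}
    (f : Ω → ℕ → Fin d → Fin d → EReal) (hf : ∀ m i j, Measurable fun ω => f ω m i j) :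
    ∀ n i, Measurable fun ω => xvec (f ω) n i := by
  intro n
  induction n with
  | zero => intro i; exact measurable_const
  | succ n ih =>
    intro i
    have hadd : Measurable fun p : EReal × EReal => p.1 + p.2 :=
      EReal.lowerSemicontinuous_add.measurable
    exact Measurable.iSup fun j => hadd.comp ((hf n i j).prodMk (ih j))

theorem path_bound {d : ℕ} (r : Fin d → Fin d → Prop) (f : ℕ → Fin d → Fin d → EReal)
    (hf : ∀ m i j, f m i j ≠ ⊤) (hr : ∀ m i j, ¬ r i j → f m i j = ⊥)
    (n K : ℕ) (M g : ℕ → ℝ) (a Mx : ℝ)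
    (hM : ∀ m i j, f m i j ≤ (M m : EReal)) (hM0 : 0 ≤ Mx) (hMx : ∀ m < n, M m ≤ Mx)
    (hg : ∀ m, 0 ≤ g m)
    (hgood : ∀ s, M s + |a| ≤ g s ∨ ∀ c, IsSCC r c → ∃ k : ℕ, 1 ≤ k ∧ k ≤ K ∧
      ⨆ i, ⨆ (_ : i ∈ c), xvec (fun m => mpRestrict c (f (s + m))) k i ≤
        ((k * a : ℝ) : EReal)) (i : Fin d) :
    xvec f n i ≤ ((a * n + ∑ m ∈ Finset.range n, g m +
      ((d : ℝ) + 1) * (K * (Mx + |a|)) : ℝ) : EReal) := by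
  classical
  by_cases hx : xvec f n i = ⊥
  · rw [hx]; exact bot_le
  obtain ⟨p, w, hp, hw, hs⟩ := xvec_path f hf n i hx
  rw [hs, EReal.coe_le_coe_iff]
  have harc : ∀ m < n, r (p (m + 1)) (p m) := by
    intro m hm
    by_contra h
    have := hr m _ _ h
    rw [hw m hm] at this
    exact EReal.coe_ne_bot _ this
  have hreach : ∀ k s, s + k ≤ n → Relation.ReflTransGen r (p (s + k)) (p s) := by
    intro k
    induction k with
    | zero => intro s _; exact Relation.ReflTransGen.refl
    | succ k ih =>
      intro s hsk
      exact Relation.ReflTransGen.head (harc (s + k) (by omega)) (ih s (by omega))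
  let R : Fin d → Finset (Fin d) := fun i => Finset.univ.filter fun j => Relation.ReflTransGen r i j
  have hRsub : ∀ i j, Relation.ReflTransGen r i j → R j ⊆ R i := by
    intro i j hij k hk
    simp only [R, Finset.mem_filter, Finset.mem_univ, true_and] at hk ⊢
    exact hij.trans hk
  have hmono : ∀ s k, s + k ≤ n → (R (p s)).card ≤ (R (p (s + k))).card := fun s k h =>
    Finset.card_le_card (hRsub _ _ (hreach k s h))
  have key := core_bound n d K w M g (fun m => (R (p m)).card) a Mx
    (fun m hm => by
      have := hM m (p (m + 1)) (p m)
      rw [hw m hm, EReal.coe_le_coe_iff] at this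
      exact this) hM0 hMx hg
    (fun m => (Finset.card_le_univ _).trans (by simp)) hmono ?_ n 0 (by omega)
  · rw [Finset.range_eq_Ico]
    have h0 : (0 : ℝ) ≤ (K * (Mx + |a|)) := by positivity
    have h1 : (0 : ℝ) ≤ ((R (p 0)).card : ℝ) := by positivity
    nlinarith [mul_nonneg h1 h0]
  · intro s hsn
    rcases hgood s with h | h
    · exact Or.inl h
    right
    obtain ⟨k, hk1, hkK, hk⟩ := h
      {j | Relation.ReflTransGen r (p s) j ∧ Relation.ReflTransGen r j (p s)} ⟨p s, rfl⟩
    by_cases hkn : s + k ≤ n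
    swap
    · exact ⟨n - s, by omega, by omega, by omega, Or.inr (Or.inl (by omega))⟩
    refine ⟨k, hk1, hkK, hkn, ?_⟩
    by_cases hlt : (R (p s)).card < (R (p (s + k))).card
    · exact Or.inr (Or.inr hlt)
    left
    have heq := Finset.eq_of_subset_of_card_le (hRsub _ _ (hreach k s hkn)) (not_lt.1 hlt)
    have hback : Relation.ReflTransGen r (p s) (p (s + k)) := by
      have : p (s + k) ∈ R (p (s + k)) := by
        simp only [R, Finset.mem_filter, Finset.mem_univ, true_and]
        exact Relation.ReflTransGen.refl
      rw [← heq] at this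
      simpa [R] using this
    have hmem : ∀ m, m ≤ k → p (s + m) ∈
        {j | Relation.ReflTransGen r (p s) j ∧ Relation.ReflTransGen r j (p s)} := by
      intro m hm
      refine ⟨hback.trans ?_, hreach m s (by omega)⟩
      have := hreach (k - m) (s + m) (by omega)
      rwa [show s + m + (k - m) = s + k by omega] at this
    have h1 := path_le_xvec (fun m => f (s + m)) _ p w s k hmem
      (fun m hm => hw (s + m) (by omega))
    have h2 := (h1.trans (le_iSup₂ (f := fun i (_ : i ∈ {j | Relation.ReflTransGen r (p s) j ∧
      Relation.ReflTransGen r j (p s)}) => xvec (fun m => mpRestrict _ (f (s + m))) k i)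
        (p (s + k)) (hmem k le_rfl))).trans hk
    exact EReal.coe_le_coe_iff.1 h2

theorem freq_birkhoff {Ω : Type*} [MeasurableSpace Ω] (μ : Measure Ω) [IsProbabilityMeasure μ]
    (θ : Ω → Ω) (hθ : MeasurePreserving θ μ μ) (G : Ω → ℝ) (hG : Measurable G)
    (hG0 : ∀ ω, 0 ≤ G ω) (hGi : Integrable G μ) (ε : ℝ) (hε : ∫ ω, G ω ∂μ < ε)
    (P : Ω → Prop) (hP : ∀ᵐ ω ∂μ, P ω) :
    ∃ ω, P ω ∧ ∃ᶠ n : ℕ in atTop, ∑ m ∈ Finset.range n, G (θ^[m] ω) ≤ ε * n := by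
  let F : ℕ → Ω → ENNReal := fun n ω =>
    (n : ENNReal)⁻¹ * ∑ m ∈ Finset.range n, ENNReal.ofReal (G (θ^[m] ω))
  have hmeas : ∀ m, Measurable fun ω => ENNReal.ofReal (G (θ^[m] ω)) := fun m =>
    (hG.comp (hθ.measurable.iterate m)).ennreal_ofReal
  have hFm : ∀ n, Measurable (F n) := fun n =>
    (Finset.measurable_sum _ fun m _ => hmeas m).const_mul _
  have hFi : ∀ n, ∫⁻ ω, F n ω ∂μ ≤ ∫⁻ ω, ENNReal.ofReal (G ω) ∂μ := by
    intro n
    rw [lintegral_const_mul _ (Finset.measurable_sum _ fun m _ => hmeas m),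
      lintegral_finsetSum _ fun m _ => hmeas m]
    have : ∀ m, ∫⁻ ω, ENNReal.ofReal (G (θ^[m] ω)) ∂μ = ∫⁻ ω, ENNReal.ofReal (G ω) ∂μ :=
      fun m => (hθ.iterate m).lintegral_comp hG.ennreal_ofReal
    simp only [this, Finset.sum_const, Finset.card_range, nsmul_eq_mul]
    rw [← mul_assoc]
    exact mul_le_of_le_one_left zero_le (ENNReal.inv_mul_le_one _)
  have hfat : ∫⁻ ω, liminf (fun n => F n ω) atTop ∂μ ≤ ENNReal.ofReal (∫ ω, G ω ∂μ) := by
    rw [ofReal_integral_eq_lintegral_ofReal hGi (ae_of_all _ hG0)]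
    refine (lintegral_liminf_le hFm).trans ?_
    refine (liminf_le_liminf (Eventually.of_forall hFi)).trans ?_
    simp
  obtain ⟨ω, hω, hle⟩ := exists_notMem_null_le_lintegral (μ := μ)
    (f := fun ω => liminf (fun n => F n ω) atTop) (Measurable.liminf hFm).aemeasurable
    (ae_iff.1 hP)
  refine ⟨ω, by simpa using hω, ?_⟩
  have hε0 : 0 < ε := (integral_nonneg hG0).trans_lt hε
  have hlt : liminf (fun n => F n ω) atTop < ENNReal.ofReal ε :=
    (hle.trans hfat).trans_lt ((ENNReal.ofReal_lt_ofReal_iff hε0).2 hε)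
  have hfr := frequently_lt_of_liminf_lt (by isBoundedDefault) hlt
  refine (hfr.and_eventually (eventually_gt_atTop 0)).mono ?_
  rintro n ⟨hn, hn0⟩
  have hn' : (0 : ℝ) < n := by exact_mod_cast hn0
  have h1 : F n ω = ENNReal.ofReal ((n : ℝ)⁻¹ * ∑ m ∈ Finset.range n, G (θ^[m] ω)) := by
    rw [ENNReal.ofReal_mul (by positivity), ENNReal.ofReal_sum_of_nonneg fun m _ => hG0 _,
      ENNReal.ofReal_inv_of_pos hn', ENNReal.ofReal_natCast]
  rw [h1, ENNReal.ofReal_lt_ofReal_iff hε0, inv_mul_lt_iff₀ hn'] at hn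
  linarith

/-- **Theorem (Baccelli–Liu decomposition of the Lyapunov exponent).**
If `(A(n))_{n∈ℕ}` is a stationary ergodic sequence (realized as `A ∘ θⁿ`) of random
`d × d` matrices over `ℝ_max` with the positive part of `max_{ij} A_{ij}(0)` integrable,
then `γ(A) = max { γ^{(c)} : c s.c.c. of 𝒢(A) }`. -/
theorem lyapunov_decomposition
    {d : ℕ} {Ω : Type*} [MeasurableSpace Ω] (μ : Measure Ω) [IsProbabilityMeasure μ]
    (θ : Ω → Ω) (hθ : Ergodic θ μ)
    (A : Ω → Fin d → Fin d → EReal) (hA : Measurable A)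
    (hnotop : ∀ ω i j, A ω i j ≠ ⊤)
    (hint : Integrable (fun ω => ((⨆ i, ⨆ j, A ω i j) ⊔ 0).toReal) μ)
    (γA : EReal)
    (hγA : ∀ᵐ ω ∂μ, Tendsto (fun n => mpScale n (⨆ i, xvec (fun m => A (θ^[m] ω)) n i))
      atTop (𝓝 γA))
    (γ : Set (Fin d) → EReal)
    (hγ : ∀ c : Set (Fin d), IsSCC (arcRel μ A) c →
      ∀ᵐ ω ∂μ, Tendsto
        (fun n => mpScale n (⨆ i, ⨆ (_ : i ∈ c), xvec (fun m => mpRestrict c (A (θ^[m] ω))) n i))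
        atTop (𝓝 (γ c))) :
    γA = ⨆ c, ⨆ (_ : IsSCC (arcRel μ A) c), γ c := by
  classical
  apply le_antisymm
  swap
  · refine iSup₂_le fun c hc => ?_
    obtain ⟨ω, h1, h2⟩ := (hγA.and (hγ c hc)).exists
    refine le_of_tendsto_of_tendsto' h2 h1 fun n => mpScale_mono n ?_
    refine iSup_mono fun i => iSup_le fun _ => xvec_restrict_le _ c n i
  by_contra hcon
  rw [not_le] at hcon
  obtain ⟨a, ha1, ha2⟩ := EReal.lt_iff_exists_real_btwn.1 hcon
  obtain ⟨b, hb1, hb2⟩ := EReal.lt_iff_exists_real_btwn.1 ha2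
  rw [EReal.coe_lt_coe_iff] at hb1
  -- basic facts on M
  let M : Ω → ℝ := fun ω => ((⨆ i, ⨆ j, A ω i j) ⊔ 0).toReal
  have hAij : ∀ i j, Measurable fun ω => A ω i j := fun i j =>
    (measurable_pi_apply j).comp ((measurable_pi_apply i).comp hA)
  have hMm : Measurable M :=
    ((Measurable.iSup fun i => Measurable.iSup fun j => hAij i j).sup measurable_const).ereal_toReal
  have hM0 : ∀ ω, 0 ≤ M ω := fun ω => EReal.toReal_nonneg le_sup_right
  have hAM : ∀ ω i j, A ω i j ≤ (M ω : EReal) := by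
    intro ω i j
    have hne : ((⨆ i, ⨆ j, A ω i j) ⊔ 0) ≠ ⊤ := by
      have hn : Nonempty (Fin d) := ⟨i⟩
      obtain ⟨i', hi'⟩ := exists_eq_ciSup_of_finite (f := fun i => ⨆ j, A ω i j)
      obtain ⟨j', hj'⟩ := exists_eq_ciSup_of_finite (f := fun j => A ω i' j)
      rw [← hi', ← hj']
      have := hnotop ω i' j'
      rcases le_total (A ω i' j') 0 with h | h
      · rw [sup_of_le_right h]; simp
      · rw [sup_of_le_left h]; exact this
    have hne' : ((⨆ i, ⨆ j, A ω i j) ⊔ 0) ≠ ⊥ := by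
      intro h
      have : (0 : EReal) ≤ ⊥ := h ▸ le_sup_right
      simp at this
    show A ω i j ≤ ((((⨆ i, ⨆ j, A ω i j) ⊔ 0).toReal : ℝ) : EReal)
    rw [EReal.coe_toReal hne hne']
    exact (le_iSup₂ (f := fun i j => A ω i j) i j).trans le_sup_left
  -- good and bad sets
  let X : Set (Fin d) → ℕ → Ω → EReal := fun c k ω =>
    ⨆ i, ⨆ (_ : i ∈ c), xvec (fun m => mpRestrict c (A (θ^[m] ω))) k i
  have hXm : ∀ c k, Measurable (X c k) := by
    intro c k
    refine Measurable.iSup fun i => Measurable.iSup fun _ => ?_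
    refine measurable_xvec (fun ω m => mpRestrict c (A (θ^[m] ω))) ?_ k i
    intro m i j
    unfold mpRestrict
    split_ifs
    · exact (hAij i j).comp (hθ.measurable.iterate m)
    · exact measurable_const
  let Good : ℕ → Set Ω := fun K => {ω | ∀ c, IsSCC (arcRel μ A) c →
    ∃ k : ℕ, 1 ≤ k ∧ k ≤ K ∧ X c k ω ≤ ((k * a : ℝ) : EReal)}
  have hGm : ∀ K, MeasurableSet (Good K) := by
    intro K
    have : Good K = ⋂ c, ⋂ (_ : IsSCC (arcRel μ A) c), ⋃ k : ℕ, ⋃ (_ : 1 ≤ k), ⋃ (_ : k ≤ K),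
        {ω | X c k ω ≤ ((k * a : ℝ) : EReal)} := by
      ext ω; simp only [Good, Set.mem_setOf_eq, Set.mem_iInter, Set.mem_iUnion, exists_prop]
    rw [this]
    refine MeasurableSet.iInter fun c => MeasurableSet.iInter fun _ =>
      MeasurableSet.iUnion fun k => MeasurableSet.iUnion fun _ => MeasurableSet.iUnion fun _ => ?_
    exact measurableSet_le (hXm c k) measurable_const
  have hGood : ∀ᵐ ω ∂μ, ∀ᶠ K in atTop, ω ∈ Good K := by
    have hall : ∀ᵐ ω ∂μ, ∀ c, IsSCC (arcRel μ A) c →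
        Tendsto (fun n => mpScale n (X c n ω)) atTop (𝓝 (γ c)) := by
      rw [ae_all_iff]
      intro c
      by_cases hc : IsSCC (arcRel μ A) c
      · filter_upwards [hγ c hc] with ω h _ using h
      · exact ae_of_all _ fun ω h => absurd h hc
    filter_upwards [hall] with ω hω
    have : ∀ᶠ K : ℕ in atTop, ∀ c, IsSCC (arcRel μ A) c →
        ∃ k : ℕ, 1 ≤ k ∧ k ≤ K ∧ X c k ω ≤ ((k * a : ℝ) : EReal) := by
      rw [eventually_all]
      intro c
      by_cases hc : IsSCC (arcRel μ A) c
      swap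
      · exact Eventually.of_forall fun K h => absurd h hc
      have hlt : γ c < a := (le_iSup₂ (f := fun c (_ : IsSCC (arcRel μ A) c) => γ c) c hc).trans_lt ha1
      obtain ⟨k, hk, hk1⟩ := (((hω c hc).eventually_lt_const hlt).and (eventually_ge_atTop 1)).exists
      filter_upwards [eventually_ge_atTop k] with K hK _
      exact ⟨k, hk1, hK, le_of_mpScale_lt hk1 hk⟩
    exact this
  let g : ℕ → Ω → ℝ := fun K => (Good K)ᶜ.indicator fun ω => M ω + |a|
  have hMa : Integrable (fun ω => M ω + |a|) μ := Integrable.add hint (integrable_const _)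
  have hgm : ∀ K, Measurable (g K) := fun K => (hMm.add_const _).indicator (hGm K).compl
  have hg0 : ∀ K ω, 0 ≤ g K ω := fun K ω =>
    Set.indicator_nonneg (fun ω _ => add_nonneg (hM0 ω) (abs_nonneg a)) ω
  have hgi : ∀ K, Integrable (g K) μ := fun K => hMa.indicator (hGm K).compl
  have hglim : Tendsto (fun K => ∫ ω, g K ω ∂μ) atTop (𝓝 0) := by
    have := tendsto_integral_of_dominated_convergence (μ := μ) (F := g) (f := fun _ => (0:ℝ))
      (fun ω => M ω + |a|) (fun K => (hgm K).aestronglyMeasurable) hMa ?_ ?_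
    · simpa using this
    · intro K
      refine ae_of_all _ fun ω => ?_
      rw [Real.norm_of_nonneg (hg0 K ω)]
      exact Set.indicator_le_self' (fun ω _ => add_nonneg (hM0 ω) (abs_nonneg a)) ω
    · filter_upwards [hGood] with ω hω
      refine tendsto_const_nhds.congr' ?_
      filter_upwards [hω] with K hK
      have : ω ∉ (Good K)ᶜ := fun h => h hK
      exact (Set.indicator_of_notMem this _).symm
  let h : ℕ → Ω → ℝ := fun L ω => max (M ω - L) 0
  have hhm : ∀ L, Measurable (h L) := fun L => (hMm.sub_const _).max measurable_const
  have hh0 : ∀ L ω, 0 ≤ h L ω := fun L ω => le_max_right _ _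
  have hhM : ∀ L ω, h L ω ≤ M ω := fun L ω =>
    max_le (by have : (0:ℝ) ≤ L := by positivity
               linarith) (hM0 ω)
  have hhi : ∀ L, Integrable (h L) μ := fun L =>
    Integrable.mono' hint (hhm L).aestronglyMeasurable
      (ae_of_all _ fun ω => by rw [Real.norm_of_nonneg (hh0 L ω)]; exact hhM L ω)
  have hhlim : Tendsto (fun L => ∫ ω, h L ω ∂μ) atTop (𝓝 0) := by
    have := tendsto_integral_of_dominated_convergence (μ := μ) (F := h) (f := fun _ => (0:ℝ))
      M (fun K => (hhm K).aestronglyMeasurable) hint ?_ ?_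
    · simpa using this
    · intro L
      exact ae_of_all _ fun ω => by rw [Real.norm_of_nonneg (hh0 L ω)]; exact hhM L ω
    · refine ae_of_all _ fun ω => ?_
      refine tendsto_const_nhds.congr' ?_
      obtain ⟨L0, hL0⟩ := exists_nat_ge (M ω)
      filter_upwards [eventually_ge_atTop L0] with L hL
      have : (L0 : ℝ) ≤ L := by exact_mod_cast hL
      exact (max_eq_right (by linarith)).symm
  obtain ⟨ε, hε, hεb⟩ : ∃ ε : ℝ, 0 < ε ∧ a + 2 * ε = b := ⟨(b - a) / 2, by linarith, by ring⟩
  obtain ⟨K, hK⟩ := (hglim.eventually_lt_const (half_pos hε)).exists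
  have hlim2 : Tendsto (fun L => ((d : ℝ) + 1) * K * ∫ ω, h L ω ∂μ) atTop (𝓝 0) := by
    simpa using hhlim.const_mul (((d : ℝ) + 1) * K)
  obtain ⟨L, hL⟩ := (hlim2.eventually_lt_const (half_pos hε)).exists
  let G : Ω → ℝ := fun ω => g K ω + ((d : ℝ) + 1) * K * h L ω
  have hGint : ∫ ω, G ω ∂μ < ε := by
    show ∫ ω, (g K ω + ((d : ℝ) + 1) * K * h L ω) ∂μ < ε
    rw [integral_add (hgi K) ((hhi L).const_mul _), integral_const_mul]
    linarith
  have hbot : ∀ᵐ ω ∂μ, ∀ m i j, ¬ arcRel μ A i j → A (θ^[m] ω) i j = ⊥ := by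
    have h0 : ∀ᵐ ω ∂μ, ∀ i j, ¬ arcRel μ A i j → A ω i j = ⊥ := by
      rw [ae_all_iff]; intro i
      rw [ae_all_iff]; intro j
      by_cases hij : arcRel μ A i j
      · exact ae_of_all _ fun ω h => absurd hij h
      · have : μ {ω | A ω i j ≠ ⊥} = 0 := not_not.1 hij
        have h2 : ∀ᵐ ω ∂μ, A ω i j = ⊥ := ae_iff.2 this
        filter_upwards [h2] with ω hω _ using hω
    rw [ae_all_iff]; intro m
    exact (hθ.toMeasurePreserving.iterate m).quasiMeasurePreserving.ae h0
  obtain ⟨ω, ⟨hω1, hω2⟩, hfreq⟩ := freq_birkhoff μ θ hθ.toMeasurePreserving G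
    ((hgm K).add ((hhm L).const_mul _))
    (fun ω => add_nonneg (hg0 K ω) (mul_nonneg (by positivity) (hh0 L ω)))
    ((hgi K).add ((hhi L).const_mul _)) ε hGint _ (hγA.and hbot)
  have hbound : ∀ n i, xvec (fun m => A (θ^[m] ω)) n i ≤
      ((a * n + ∑ m ∈ Finset.range n, G (θ^[m] ω) + ((d : ℝ) + 1) * K * (L + |a|) : ℝ) : EReal) := by
    intro n i
    have hsum0 : 0 ≤ ∑ m ∈ Finset.range n, h L (θ^[m] ω) :=
      Finset.sum_nonneg fun m _ => hh0 L _
    have := path_bound (arcRel μ A) (fun m => A (θ^[m] ω)) (fun m => hnotop _) hω2 n K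
      (fun m => M (θ^[m] ω)) (fun m => g K (θ^[m] ω)) a
      (L + ∑ m ∈ Finset.range n, h L (θ^[m] ω)) (fun m => hAM _) (by positivity) ?_
      (fun m => hg0 K _) ?_ i
    · refine this.trans (le_of_eq ?_)
      congr 1
      simp only [G, Finset.sum_add_distrib, ← Finset.mul_sum]
      ring
    · intro m hm
      have h1 : h L (θ^[m] ω) ≤ ∑ m ∈ Finset.range n, h L (θ^[m] ω) :=
        Finset.single_le_sum (f := fun m => h L (θ^[m] ω)) (fun m _ => hh0 L _) (Finset.mem_range.2 hm)
      have h2 : M (θ^[m] ω) - L ≤ h L (θ^[m] ω) := le_max_left _ _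
      linarith
    · intro s
      by_cases hs : θ^[s] ω ∈ Good K
      · right
        intro c hc
        obtain ⟨k, hk1, hk2, hk3⟩ := hs c hc
        refine ⟨k, hk1, hk2, ?_⟩
        have he : (fun m => mpRestrict c (A (θ^[s + m] ω))) =
            fun m => mpRestrict c (A (θ^[m] (θ^[s] ω))) := by
          funext m
          rw [← Function.iterate_add_apply, add_comm]
        rw [he]
        exact hk3
      · left
        exact (Set.indicator_of_mem (s := (Good K)ᶜ) hs fun ω => M ω + |a|).ge
  have hCn : ∀ᶠ n : ℕ in atTop, ((d : ℝ) + 1) * K * (L + |a|) ≤ ε * n := by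
    have : Tendsto (fun n : ℕ => ε * (n : ℝ)) atTop atTop :=
      tendsto_natCast_atTop_atTop.const_mul_atTop hε
    exact this.eventually_ge_atTop _
  have hle : γA ≤ b := by
    refine le_of_tendsto_of_frequently hω1 ?_
    refine (hfreq.and_eventually (hCn.and (eventually_gt_atTop 0))).mono ?_
    rintro n ⟨h1, h2, h3⟩
    have hn : (0 : ℝ) < n := by exact_mod_cast h3
    have h4 : (⨆ i, xvec (fun m => A (θ^[m] ω)) n i) ≤ ((n * b : ℝ) : EReal) := by
      refine iSup_le fun i => (hbound n i).trans ?_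
      rw [EReal.coe_le_coe_iff, ← hεb]
      linarith
    refine (mpScale_mono n h4).trans (le_of_eq ?_)
    unfold mpScale
    rw [← EReal.coe_mul, inv_mul_cancel_left₀ hn.ne']
  exact absurd hb2 (not_lt.2 hle)
end
end

section
/- Let (A(n))_{n∈ℤ} be a stationary and ergodic sequence of random d×d matrices with entries in ℝ_max, almost surely having at least one finite entry on each row, such that A(0)⊗0 is integrable, and suppose (1/n)·y(n,0) converges almost surely to a deterministic vector L ∈ ℝ^d. Then for every arc (i,j) of 𝒢(A) (i.e. whenever ℙ(A_{ij}(0) ≠ -∞) > 0), L_i ≥ L_j; consequently, for every strongly connected component c of 𝒢(A) and every i ∈ c, L_i = max_{j∈F_c} L_j. -/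
open Filter MeasureTheory ProbabilityTheory Topology

noncomputable section

/-- `F_c` : the union of the s.c.c.'s reachable from `c`. -/
def Fset {d : ℕ} (r : Fin d → Fin d → Prop) (c : Set (Fin d)) : Set (Fin d) :=
  {j | ∃ ct, IsSCC r ct ∧ sccReach r c ct ∧ j ∈ ct}

lemma mp_real_tendsto {y : ℕ → EReal} {l : ℝ}
    (h : Tendsto (fun n => mpScale n (y n)) atTop (𝓝 (l : EReal))) :
    Tendsto (fun n : ℕ => (n : ℝ)⁻¹ * (y n).toReal) atTop (𝓝 l) ∧
    ∀ᶠ n in atTop, y n ≠ ⊥ ∧ y n ≠ ⊤ := by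
  constructor
  · have h1 := (EReal.tendsto_toReal (EReal.coe_ne_top l) (EReal.coe_ne_bot l)).comp h
    simpa [Function.comp_def, mpScale, EReal.toReal_mul] using h1
  · have hb := h.eventually_ne (EReal.coe_ne_bot l)
    have ht := h.eventually_ne (EReal.coe_ne_top l)
    filter_upwards [hb, ht, eventually_gt_atTop 0] with n hb ht hn
    have hpos : (0 : ℝ) < (n : ℝ)⁻¹ := by positivity
    constructor
    · intro e
      apply hb
      rw [mpScale, e, EReal.coe_mul_bot_of_pos hpos]
    · intro e
      apply ht
      rw [mpScale, e, EReal.coe_mul_top_of_pos hpos]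

lemma mp_limit_le {y z : ℕ → EReal} {l m : ℝ} {a : EReal} (ha : a ≠ ⊥) (ha' : a ≠ ⊤)
    (hy : Tendsto (fun n => mpScale n (y n)) atTop (𝓝 (l : EReal)))
    (hz : Tendsto (fun n => mpScale n (z n)) atTop (𝓝 (m : EReal)))
    (hle : ∀ n, a + z n ≤ y (n + 1)) : m ≤ l := by
  obtain ⟨hy1, hy2⟩ := mp_real_tendsto hy
  obtain ⟨hz1, hz2⟩ := mp_real_tendsto hz
  have hy1' := (tendsto_add_atTop_iff_nat 1).2 hy1
  have hy2' := (tendsto_add_atTop_nat 1).eventually hy2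
  have hinv : Tendsto (fun n : ℕ => ((n : ℝ) + 1)⁻¹) atTop (𝓝 0) := by
    simpa using tendsto_one_div_add_atTop_nhds_zero_nat (𝕜 := ℝ)
  have hfrac : Tendsto (fun n : ℕ => 1 - ((n : ℝ) + 1)⁻¹) atTop (𝓝 1) := by
    simpa using hinv.const_sub 1
  have hlim := (hinv.mul_const a.toReal).add (hfrac.mul hz1)
  simp only [zero_mul, one_mul, zero_add] at hlim
  refine le_of_tendsto_of_tendsto hlim hy1' ?_
  filter_upwards [hz2, hy2', eventually_gt_atTop 0] with n hzn hyn hn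
  have hn' : (0 : ℝ) < n := by exact_mod_cast hn
  have h := hle n
  lift a to ℝ using ⟨ha', ha⟩
  have e1 := EReal.coe_toReal hzn.2 hzn.1
  have e2 := EReal.coe_toReal hyn.2 hyn.1
  rw [← e1, ← e2] at h
  have h' : a + (z n).toReal ≤ (y (n + 1)).toReal := by exact_mod_cast h
  have e3 : ((n : ℝ) + 1)⁻¹ * a + (1 - ((n : ℝ) + 1)⁻¹) * ((n : ℝ)⁻¹ * (z n).toReal)
      = ((n : ℝ) + 1)⁻¹ * (a + (z n).toReal) := by
    field_simp
    ring
  simp only [EReal.toReal_coe, Nat.cast_add, Nat.cast_one]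
  rw [e3]
  gcongr

/-- **Monotonicity of the deterministic limit along arcs of `𝒢(A)`.**
If `(A(n))_{n∈ℤ}` is stationary ergodic, a.s. row-finite, `A(0) ⊗ 0` integrable and
`(1/n) y(n,0) → L` a.s. with `L ∈ ℝ^d` deterministic, then `L_i ≥ L_j` for every arc
`(i,j)` of `𝒢(A)`; consequently `L_i = max_{j ∈ F_c} L_j` for every s.c.c. `c` and `i ∈ c`. -/
theorem deterministic_limit_monotone_on_graph
    {d : ℕ} {Ω : Type*} [MeasurableSpace Ω] (μ : Measure Ω) [IsProbabilityMeasure μ]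
    (θ θ' : Ω → Ω) (hθ : Ergodic θ μ)
    (hinv : ∀ ω, θ (θ' ω) = ω ∧ θ' (θ ω) = ω)
    (A : Ω → Fin d → Fin d → EReal) (hA : Measurable A)
    (hnotop : ∀ ω i j, A ω i j ≠ ⊤)
    (hrow : ∀ᵐ ω ∂μ, ∀ i, ∃ j, A ω i j ≠ ⊥)
    (hint : ∀ i, Integrable (fun ω => (⨆ j, A ω i j).toReal) μ)
    (L : Fin d → ℝ)
    (hL : ∀ᵐ ω ∂μ, ∀ i, Tendsto (fun n => mpScale n (lvec n (fun k => A (θ'^[k + 1] ω)) i))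
      atTop (𝓝 ((L i : ℝ) : EReal))) :
    (∀ i j, arcRel μ A i j → L j ≤ L i) ∧
    (∀ c : Set (Fin d), IsSCC (arcRel μ A) c → ∀ i ∈ c,
      L i = sSup (L '' Fset (arcRel μ A) c)) := by
  have key : ∀ i j, arcRel μ A i j → L j ≤ L i := by
    intro i j hij
    have hL' := hθ.quasiMeasurePreserving.ae hL
    have hfr : ∃ᵐ ω ∂μ, A ω i j ≠ ⊥ := by
      rw [frequently_ae_iff]
      exact hij
    obtain ⟨ω, hω, h1, h2⟩ := (hfr.and_eventually (hL.and hL')).exists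
    refine mp_limit_le hω (hnotop ω i j) (h2 i) (h1 j) ?_
    intro n
    have e : θ' (θ ω) = ω := (hinv ω).2
    simp only [lvec, appProd, mpVec, Function.iterate_succ, Function.comp, e,
      Function.iterate_zero, id]
    exact le_iSup (fun j => A ω i j + _) j
  have path : ∀ i j, Relation.ReflTransGen (arcRel μ A) i j → L j ≤ L i := by
    intro i j h
    induction h with
    | refl => exact le_rfl
    | tail _ h ih => exact (key _ _ h).trans ih
  refine ⟨key, ?_⟩
  intro c hc i hi
  symm
  apply IsGreatest.csSup_eq
  refine ⟨⟨i, ⟨c, hc, ⟨i, hi, i, hi, .refl⟩, hi⟩, rfl⟩, ?_⟩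
  rintro _ ⟨j, ⟨ct, ⟨k, rfl⟩, ⟨p, hp, q, hq, hpq⟩, hj⟩, rfl⟩
  obtain ⟨r, rfl⟩ := hc
  exact path _ _ (hi.2.trans (hp.1.trans (hpq.trans (hq.2.trans hj.1))))
end
end
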